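/- arXiv:1503.06390 — 4 statements merged into one kernel-verified Lean document; each statement's English description precedes it below -/
import Mathlib

section
/- Let A be a unital C*-algebra, B ⊆ A a unital C*-subalgebra, X a selfadjoint element of A, a₀ a selfadjoint element of B, and η : A → B a continuous completely positive linear map. Let H⁺(B) = {b ∈ B : Im b is strictly positive} and suppose ω : H⁺(B) → H⁺(B) satisfies ω(b) = b + a₀ + η((X − ω(b))⁻¹) for all b ∈ H⁺(B). Let α ∈ B be selfadjoint, v ∈ B strictly positive, and suppose there is a sequence (yₙ) of positive reals converging to 0 such that ω(α + i yₙ v) converges in norm to a selfadjoint element ω₀ ∈ B, and such that ℓ := limₙ Im ω(α + i yₙ v)/‖Im ω(α + i yₙ v)‖ exists in norm and is strictly positive. Then for every state φ on B and every strictly positive u ∈ B, liminf over y → 0⁺ of φ(Im η((X − ω₀ − i y u)⁻¹))/y is finite; in fact there exists ε₀ > 0 such that φ(Im η((X − ω₀ − i y u)⁻¹)) ≤ y/ε₀ for all y > 0. -/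
/-!
Write `S = X - a` and `T = X - b` with `ℑ a, ℑ b` strictly positive. By the resolvent identity
`S⁻¹ (a - b*) (T⁻¹)* = S⁻¹ - (T⁻¹)*` has imaginary part `ℑ S⁻¹ + ℑ T⁻¹`, so the operator AM-GM
inequality weighted by `ℑ a`, together with `ℑ S⁻¹ = S⁻¹ (ℑ a) (S⁻¹)*`, yields
`ℑ S⁻¹ ≤ T⁻¹ ((a - b*)* (ℑ a)⁻¹ (a - b*)) (T⁻¹)*`. Since `ℑ T⁻¹ = T⁻¹ (ℑ b) (T⁻¹)*`, any
horodisc condition `(a - b*)* (ℑ a)⁻¹ (a - b*) ≤ r ℑ b` implies `ℑ S⁻¹ ≤ r ℑ T⁻¹`.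

As `b → ℜ a`, the left side of that condition tends to `ℑ a`, so it holds eventually with
`b = ω(zₙ)` whenever `rₙ ℑ ω(zₙ)` converges to some `p` with `p - ℑ a` strictly positive. The
subordination equation gives `η (ℑ T⁻¹) ≤ ℑ ω(zₙ)`, so in the limit `η (ℑ S⁻¹) ≤ p`; the choice
`a = ω₀ + i t u` allows `p` to be a fixed multiple of `t ℓ`.
-/

noncomputable section

open Filter Topology
open scoped ComplexOrder

/-- The real part `(b + b*)/2` of an element of a complex star algebra. -/
def reP {A : Type*} [NonUnitalRing A] [StarRing A] [Module ℂ A] (b : A) : A :=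
  (2 : ℂ)⁻¹ • (b + star b)

/-- The imaginary part `(b - b*)/(2i)` of an element of a complex star algebra. -/
def imP {A : Type*} [NonUnitalRing A] [StarRing A] [Module ℂ A] (b : A) : A :=
  (2 * Complex.I)⁻¹ • (b - star b)

/-- An element of a C*-algebra is strictly positive if it is selfadjoint, positive
(with respect to the canonical order coming from the star-ordered ring structure)
and invertible. -/
def SPos {A : Type*} [Ring A] [StarRing A] [PartialOrder A] (v : A) : Prop :=
  IsSelfAdjoint v ∧ 0 ≤ v ∧ IsUnit v

open scoped ComplexStarModule Ring

section StrictlyPositive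

variable {A : Type*} [CStarAlgebra A] [PartialOrder A] [StarOrderedRing A]

lemma sPos_iff_isStrictlyPositive {v : A} : SPos v ↔ IsStrictlyPositive v :=
  ⟨fun h => h.2.2.isStrictlyPositive h.2.1, fun h => ⟨h.isSelfAdjoint, h.nonneg, h.isUnit⟩⟩

lemma exists_pos_algebraMap_le_of_isStrictlyPositive {p : A} (hp : IsStrictlyPositive p) :
    ∃ c : ℝ, 0 < c ∧ algebraMap ℝ A c ≤ p := by
  cases subsingleton_or_nontrivial A
  · exact ⟨1, one_pos, (Subsingleton.elim _ _).le⟩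
  · exact (CFC.exists_pos_algebraMap_le_iff hp.isSelfAdjoint).mpr fun _ => hp.spectrum_pos

lemma exists_pos_isStrictlyPositive_smul_sub {p a : A} (hp : IsStrictlyPositive p)
    (ha : IsSelfAdjoint a) : ∃ M : ℝ, 0 < M ∧ IsStrictlyPositive (M • p - a) := by
  obtain ⟨c, hc, hcp⟩ := exists_pos_algebraMap_le_of_isStrictlyPositive hp
  have hM : 0 < (‖a‖ + 1) / c := by positivity
  refine ⟨(‖a‖ + 1) / c, hM, (isStrictlyPositive_one (A := A)).of_le ?_⟩
  calc (1 : A) = ((‖a‖ + 1) / c) • algebraMap ℝ A c - algebraMap ℝ A ‖a‖ := by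
        rw [Algebra.smul_def, ← map_mul, ← map_sub, div_mul_cancel₀ _ hc.ne',
          add_sub_cancel_left, map_one]
    _ ≤ ((‖a‖ + 1) / c) • p - a :=
        sub_le_sub (smul_le_smul_of_nonneg_left hcp hM.le) ha.le_algebraMap_norm_self

lemma eventually_nonneg_of_tendsto_isStrictlyPositive {β : Type*} {l : Filter β} {f : β → A}
    {p : A} (hf : ∀ n, IsSelfAdjoint (f n)) (hp : IsStrictlyPositive p)
    (hlim : Tendsto f l (𝓝 p)) : ∀ᶠ n in l, 0 ≤ f n := by
  obtain ⟨c, hc, hcp⟩ := exists_pos_algebraMap_le_of_isStrictlyPositive hp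
  filter_upwards [hlim.eventually (Metric.ball_mem_nhds p hc)] with n hn
  have hdist : ‖p - f n‖ ≤ c := by rw [← dist_eq_norm']; exact (Metric.mem_ball.mp hn).le
  have hdiff : p - f n ≤ p :=
    calc p - f n ≤ algebraMap ℝ A ‖p - f n‖ := (hp.isSelfAdjoint.sub (hf n)).le_algebraMap_norm_self
      _ ≤ algebraMap ℝ A c := algebraMap_mono A hdist
      _ ≤ p := hcp
  exact (sub_le_self_iff p).mp hdiff

lemma isUnit_add_I_smul {h p : A} (hh : IsSelfAdjoint h) (hp : IsStrictlyPositive p) :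
    IsUnit (h + Complex.I • p) := by
  have hsum : IsUnit (h * p⁻¹ʳ * h + p) :=
    (hp.nonneg_add (hh.conjugate_nonneg hp.ringInverse.nonneg)).isUnit
  have hfactor (z : ℂ) (hz : z * z = -1) :
      (h - z • p) * p⁻¹ʳ * (h + z • p) = h * p⁻¹ʳ * h + p :=
    calc (h - z • p) * p⁻¹ʳ * (h + z • p)
      _ = h * p⁻¹ʳ * h + z • (h * (p⁻¹ʳ * p)) - z • (p * p⁻¹ʳ * h) - (z * z) • (p * p⁻¹ʳ * p) := by
        simp only [sub_mul, mul_add, smul_mul_assoc, mul_smul_comm, smul_sub, mul_smul, mul_assoc]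
        abel
      _ = h * p⁻¹ʳ * h + p := by
        simp only [Ring.inverse_mul_cancel p hp.isUnit, Ring.mul_inverse_cancel p hp.isUnit, hz]
        simp
  have hleft := hfactor Complex.I Complex.I_mul_I
  have hright := hfactor (-Complex.I) (by simp)
  rw [neg_smul, sub_neg_eq_add, ← sub_eq_add_neg] at hright
  refine isUnit_iff_exists_and_exists.mpr
    ⟨⟨p⁻¹ʳ * (h - Complex.I • p) * (h * p⁻¹ʳ * h + p)⁻¹ʳ, ?_⟩,
      ⟨(h * p⁻¹ʳ * h + p)⁻¹ʳ * ((h - Complex.I • p) * p⁻¹ʳ), ?_⟩⟩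
  · rw [← mul_assoc, ← mul_assoc, hright, Ring.mul_inverse_cancel _ hsum]
  · rw [mul_assoc, hleft, Ring.inverse_mul_cancel _ hsum]

lemma isUnit_sub_of_isStrictlyPositive_imaginaryPart {X w : A} (hX : IsSelfAdjoint X)
    (hw : IsStrictlyPositive (ℑ w : A)) : IsUnit (X - w) := by
  rw [IsUnit.sub_iff, ← realPart_add_I_smul_imaginaryPart w, add_sub_right_comm]
  exact isUnit_add_I_smul ((ℜ w).2.sub hX) hw

end StrictlyPositive

section StarOrderedRing

variable {A : Type*} [Ring A] [StarRing A] [PartialOrder A] [StarOrderedRing A]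

lemma isStrictlyPositive_map {B F : Type*} [Ring B] [StarRing B] [PartialOrder B]
    [StarOrderedRing B] [FunLike F A B] [RingHomClass F A B] [NonUnitalStarRingHomClass F A B]
    (f : F) {p : A} (hp : IsStrictlyPositive p) : IsStrictlyPositive (f p) :=
  (hp.isUnit.map f).isStrictlyPositive (map_nonneg f hp.nonneg)

lemma mul_star_add_mul_star_le {q : A} (hq : IsStrictlyPositive q) (x y : A) :
    x * star y + y * star x ≤ x * q * star x + y * q⁻¹ʳ * star y := by
  have hmul : q * q⁻¹ʳ = 1 := Ring.mul_inverse_cancel q hq.isUnit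
  have hinv : q⁻¹ʳ * q = 1 := Ring.inverse_mul_cancel q hq.isUnit
  have hstar : star q⁻¹ʳ = q⁻¹ʳ := hq.isSelfAdjoint.ringInverse.star_eq
  have hsq : (x - y * q⁻¹ʳ) * q * star (x - y * q⁻¹ʳ) =
      x * q * star x + y * q⁻¹ʳ * star y - (x * star y + y * star x) :=
    calc (x - y * q⁻¹ʳ) * q * star (x - y * q⁻¹ʳ)
      _ = x * q * star x + y * (q⁻¹ʳ * q) * q⁻¹ʳ * star y
          - (x * (q * q⁻¹ʳ) * star y + y * (q⁻¹ʳ * q) * star x) := by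
        rw [star_sub, star_mul, hstar]; noncomm_ring
      _ = _ := by simp only [hmul, hinv, mul_one]
  rw [← sub_nonneg, ← hsq]
  exact star_right_conjugate_nonneg hq.nonneg _

end StarOrderedRing

section Resolvent

variable {A : Type*} [Ring A] [StarRing A] [Algebra ℂ A] [StarModule ℂ A]

lemma imP_eq_imaginaryPart (a : A) : imP a = ℑ a := by
  rw [imP, imaginaryPart_apply_coe, ← Complex.coe_smul, smul_smul]
  congr 1
  simp [mul_comm]

lemma realPart_add_ofReal_mul_I_smul {a u : A} (ha : IsSelfAdjoint a) (hu : IsSelfAdjoint u)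
    (t : ℝ) : (ℜ (a + ((t : ℂ) * Complex.I) • u) : A) = a := by
  simp [realPart_smul, ha.coe_realPart, hu.imaginaryPart]

lemma imaginaryPart_add_ofReal_mul_I_smul {a u : A} (ha : IsSelfAdjoint a)
    (hu : IsSelfAdjoint u) (t : ℝ) : (ℑ (a + ((t : ℂ) * Complex.I) • u) : A) = t • u := by
  simp [imaginaryPart_smul, ha.imaginaryPart, hu.coe_realPart]

lemma imaginaryPart_inverse_sub {X w : A} (hX : IsSelfAdjoint X) (hw : IsUnit (X - w)) :
    (ℑ (X - w)⁻¹ʳ : A) = (X - w)⁻¹ʳ * ℑ w * star (X - w)⁻¹ʳ := by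
  set R := (X - w)⁻¹ʳ
  have hR : R * (X - w) = 1 := Ring.inverse_mul_cancel _ hw
  have hR_star : star (X - w) * star R = 1 := by rw [← star_mul, hR, star_one]
  have hdiff : R - star R = R * (w - star w) * star R :=
    calc R - star R = R * (star (X - w) * star R) - R * (X - w) * star R := by
          rw [hR_star, hR, mul_one, one_mul]
      _ = R * (w - star w) * star R := by rw [star_sub, hX.star_eq]; noncomm_ring
  simp only [imaginaryPart_apply_coe, hdiff, mul_smul_comm, smul_mul_assoc]

/-- The operator form of `|a - b̄|² / ℑ a`: comparing it with multiples of `ℑ b` describes the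
horodiscs of the upper half-plane of `A`. At selfadjoint `b` it is the kernel
`(a - b)* (ℑ a)⁻¹ (a - b)` of the horodiscs based at `b`. The value is meaningful only when `ℑ a`
is invertible. -/
def horodiscKernel (a b : A) : A :=
  star (a - star b) * (ℑ a : A)⁻¹ʳ * (a - star b)

lemma isSelfAdjoint_horodiscKernel (a b : A) : IsSelfAdjoint (horodiscKernel a b) :=
  (ℑ a).2.ringInverse.conjugate' _

lemma horodiscKernel_realPart {a : A} (ha : IsUnit (ℑ a : A)) :
    horodiscKernel a (ℜ a) = ℑ a := by
  have hdiff : a - star (ℜ a : A) = Complex.I • (ℑ a : A) := by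
    rw [(ℜ a).2.star_eq, sub_eq_iff_eq_add', realPart_add_I_smul_imaginaryPart]
  rw [horodiscKernel, hdiff, star_smul, (ℑ a).2.star_eq, smul_mul_assoc,
    Ring.mul_inverse_cancel _ ha, smul_mul_smul_comm, one_mul]
  simp

lemma continuous_horodiscKernel [TopologicalSpace A] [IsTopologicalRing A] [ContinuousStar A]
    (a : A) : Continuous (horodiscKernel a) := by
  unfold horodiscKernel
  fun_prop

variable [PartialOrder A] [StarOrderedRing A]

lemma imaginaryPart_inverse_sub_le {X a b : A} (hX : IsSelfAdjoint X)
    (ha : IsStrictlyPositive (ℑ a : A)) (hXa : IsUnit (X - a))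
    (hb : 0 ≤ (ℑ b : A)) (hXb : IsUnit (X - b)) :
    (ℑ (X - a)⁻¹ʳ : A) ≤
      (X - b)⁻¹ʳ * horodiscKernel a b * star (X - b)⁻¹ʳ := by
  set R := (X - a)⁻¹ʳ
  set Q := (X - b)⁻¹ʳ
  set d := a - star b
  have hR : R * (X - a) = 1 := Ring.inverse_mul_cancel _ hXa
  have hQ : star (X - b) * star Q = 1 := by
    rw [← star_mul, Ring.inverse_mul_cancel _ hXb, star_one]
  have hresolvent : R * d * star Q = R - star Q :=
    calc R * d * star Q = R * (star (X - b) * star Q) - R * (X - a) * star Q := by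
          rw [star_sub, hX.star_eq, mul_assoc, mul_assoc, ← mul_sub, ← sub_mul,
            sub_sub_sub_cancel_left]
      _ = R - star Q := by rw [hQ, hR, mul_one, one_mul]
  have hresolvent_star : Q * star d * star R = star R - Q := by
    simpa [mul_assoc] using congrArg star hresolvent
  have hcross : R * star (Complex.I • (Q * star d)) + Complex.I • (Q * star d) * star R =
      ℑ R + (ℑ R + (ℑ Q + ℑ Q) : A) := by
    have h₁ : R * star (Complex.I • (Q * star d)) = -Complex.I • (R - star Q) := by
      rw [← hresolvent]; simp [mul_assoc]
    rw [h₁, smul_mul_assoc, hresolvent_star]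
    simp only [imaginaryPart_apply_coe, ← Complex.coe_smul]
    push_cast
    module
  have hIm_Q : 0 ≤ (ℑ Q : A) := by
    rw [imaginaryPart_inverse_sub hX hXb]; exact star_right_conjugate_nonneg hb Q
  have hAMGM := mul_star_add_mul_star_le ha R (Complex.I • (Q * star d))
  rw [hcross, ← imaginaryPart_inverse_sub hX hXa, add_le_add_iff_left] at hAMGM
  calc (ℑ R : A) ≤ ℑ R + (ℑ Q + ℑ Q : A) := le_add_of_nonneg_right (add_nonneg hIm_Q hIm_Q)
    _ ≤ _ := hAMGM
    _ = Q * (star d * (ℑ a : A)⁻¹ʳ * d) * star Q := by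
        simp [d, mul_assoc, smul_smul]

lemma imaginaryPart_inverse_sub_le_smul {X a b : A} (hX : IsSelfAdjoint X)
    (ha : IsStrictlyPositive (ℑ a : A)) (hXa : IsUnit (X - a))
    (hb : 0 ≤ (ℑ b : A)) (hXb : IsUnit (X - b)) {k : ℝ}
    (hab : horodiscKernel a b ≤ k • (ℑ b : A)) :
    (ℑ (X - a)⁻¹ʳ : A) ≤ k • (ℑ (X - b)⁻¹ʳ : A) :=
  calc (ℑ (X - a)⁻¹ʳ : A)
    _ ≤ (X - b)⁻¹ʳ * horodiscKernel a b * star (X - b)⁻¹ʳ :=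
        imaginaryPart_inverse_sub_le hX ha hXa hb hXb
    _ ≤ (X - b)⁻¹ʳ * (k • (ℑ b : A)) * star (X - b)⁻¹ʳ := star_right_conjugate_le_conjugate hab _
    _ = k • (ℑ (X - b)⁻¹ʳ : A) := by
        rw [mul_smul_comm, smul_mul_assoc, imaginaryPart_inverse_sub hX hXb]

end Resolvent

lemma apply_le_of_le_algebraMap {B : Type*} [Ring B] [PartialOrder B] [Algebra ℂ B]
    {φ : B →ₚ[ℂ] ℂ} (hφ : φ 1 = 1) {b : B} {r : ℝ} (hb : b ≤ algebraMap ℝ B r) : φ b ≤ r := by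
  refine (OrderHomClass.mono φ hb).trans_eq ?_
  rw [Algebra.algebraMap_eq_smul_one, PositiveLinearMap.map_smul_of_tower, hφ]
  simp

section BoundaryLimit

variable {A B : Type*} [CStarAlgebra A] [PartialOrder A] [StarOrderedRing A]
  [CStarAlgebra B] [PartialOrder B] [StarOrderedRing B] {β : Type*} {l : Filter β}

lemma eventually_imaginaryPart_inverse_sub_le_smul {X a p : A} (hX : IsSelfAdjoint X)
    (ha : IsStrictlyPositive (ℑ a : A)) {b : β → A} {r : β → ℝ}
    (hb : ∀ n, IsStrictlyPositive (ℑ (b n) : A)) (hlim : Tendsto b l (𝓝 (ℜ a)))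
    (hlim_im : Tendsto (fun n => r n • (ℑ (b n) : A)) l (𝓝 p))
    (hp : IsStrictlyPositive (p - ℑ a)) :
    ∀ᶠ n in l, (ℑ (X - a)⁻¹ʳ : A) ≤ r n • (ℑ (X - b n)⁻¹ʳ : A) := by
  have hkernel : Tendsto (fun n => horodiscKernel a (b n)) l (𝓝 (ℑ a)) := by
    simpa only [horodiscKernel_realPart ha.isUnit, Function.comp_def] using
      ((continuous_horodiscKernel a).tendsto (ℜ a)).comp hlim
  have hgap_sa (n : β) : IsSelfAdjoint (r n • (ℑ (b n) : A) - horodiscKernel a (b n)) :=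
    ((IsSelfAdjoint.all (r n)).smul (ℑ (b n)).2).sub (isSelfAdjoint_horodiscKernel a (b n))
  filter_upwards [eventually_nonneg_of_tendsto_isStrictlyPositive hgap_sa hp
    (hlim_im.sub hkernel)] with n hn
  exact imaginaryPart_inverse_sub_le_smul hX ha
    (isUnit_sub_of_isStrictlyPositive_imaginaryPart hX ha) (hb n).nonneg
    (isUnit_sub_of_isStrictlyPositive_imaginaryPart hX (hb n)) (sub_nonneg.mp hn)

lemma map_imaginaryPart_inverse_sub_le [l.NeBot] (ι : B →⋆ₐ[ℂ] A) (η : A →ₚ[ℂ] B) {X a : A}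
    (hX : IsSelfAdjoint X) (ha : IsStrictlyPositive (ℑ a : A)) {w : β → B} {r : β → ℝ} {p : B}
    (hw : ∀ n, IsStrictlyPositive (ℑ (w n) : B)) (hr : ∀ n, 0 ≤ r n)
    (hle : ∀ n, η (ℑ (X - ι (w n))⁻¹ʳ) ≤ ℑ (w n))
    (hlim : Tendsto (fun n => ι (w n)) l (𝓝 (ℜ a)))
    (hlim_im : Tendsto (fun n => r n • (ℑ (w n) : B)) l (𝓝 p))
    (hp : IsStrictlyPositive (ι p - ℑ a)) : η (ℑ (X - a)⁻¹ʳ) ≤ p := by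
  have hι_im (n : β) : IsStrictlyPositive (ℑ (ι (w n)) : A) := by
    rw [← map_imaginaryPart]; exact isStrictlyPositive_map ι (hw n)
  have hι_lim : Tendsto (fun n => r n • (ℑ (ι (w n)) : A)) l (𝓝 (ι p)) := by
    simpa [← map_imaginaryPart, ← Complex.coe_smul, Function.comp_def] using
      ((map_continuous ι).tendsto p).comp hlim_im
  refine ge_of_tendsto hlim_im ?_
  filter_upwards [eventually_imaginaryPart_inverse_sub_le_smul hX ha hι_im hlim hι_lim hp]
    with n hn
  calc η (ℑ (X - a)⁻¹ʳ)
    _ ≤ η (r n • (ℑ (X - ι (w n))⁻¹ʳ : A)) := OrderHomClass.mono η hn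
    _ = r n • η (ℑ (X - ι (w n))⁻¹ʳ) := PositiveLinearMap.map_smul_of_tower η _ _
    _ ≤ r n • (ℑ (w n) : B) := smul_le_smul_of_nonneg_left (hle n) (hr n)

lemma map_nonneg_of_matrix_fin_one {f : A → B}
    (hf : ∀ p : Matrix (Fin 1) (Fin 1) A, (∃ y : Matrix (Fin 1) (Fin 1) A, p = star y * y) →
      ∃ z : Matrix (Fin 1) (Fin 1) B, p.map f = star z * z)
    {a : A} (ha : 0 ≤ a) : 0 ≤ f a := by
  obtain ⟨b, rfl⟩ := CStarAlgebra.nonneg_iff_eq_star_mul_self.mp ha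
  obtain ⟨z, hz⟩ := hf _ ⟨Matrix.of fun _ _ => b, rfl⟩
  have hentry : f (star b * b) = star (z 0 0) * z 0 0 := by
    simpa [Matrix.mul_apply, Matrix.star_apply] using congrFun (congrFun hz 0) 0
  exact hentry ▸ star_mul_self_nonneg _

lemma map_imaginaryPart_inverse_sub_le_of_subordination (ι : B →⋆ₐ[ℂ] A) (η : A →ₚ[ℂ] B)
    {X : A} {a₀ b w : B} (ha₀ : IsSelfAdjoint a₀) (hb : 0 ≤ (ℑ b : B))
    (hw : w = b + a₀ + η (X - ι w)⁻¹ʳ) : η (ℑ (X - ι w)⁻¹ʳ) ≤ ℑ w := by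
  have him : (ℑ w : B) = ℑ b + η (ℑ (X - ι w)⁻¹ʳ) := by
    conv_lhs => rw [hw]
    simp [ha₀.imaginaryPart, map_imaginaryPart]
  exact him ▸ le_add_of_nonneg_left hb

theorem julia_caratheodory_horodiscs_general {β : Type*} {l : Filter β} [l.NeBot]
    (ι : B →⋆ₐ[ℂ] A) {X : A} (hX : IsSelfAdjoint X) {a₀ : B} (ha₀ : IsSelfAdjoint a₀)
    (η : A →ₚ[ℂ] B) {ω : B → B}
    (hω : ∀ b : B, SPos (imP b) →
      SPos (imP (ω b)) ∧ ω b = b + a₀ + η (Ring.inverse (X - ι (ω b))))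
    {z : β → B} (hz : ∀ n, SPos (imP (z n)))
    {ω₀ : B} (hω₀ : IsSelfAdjoint ω₀) (hconv : Tendsto (fun n => ω (z n)) l (𝓝 ω₀))
    {ℓ : B} (hℓ : SPos ℓ)
    (hlconv : Tendsto (fun n => ‖imP (ω (z n))‖⁻¹ • imP (ω (z n))) l (𝓝 ℓ))
    {u : A} (hu : SPos u) :
    ∃ ε₀ : ℝ, 0 < ε₀ ∧ ∀ t : ℝ, 0 < t →
      imP (η (Ring.inverse (X - ι ω₀ - ((t : ℂ) * Complex.I) • u))) ≤ algebraMap ℝ B (t / ε₀) := by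
  simp only [sPos_iff_isStrictlyPositive, imP_eq_imaginaryPart] at *
  have hle (n : β) : η (ℑ (X - ι (ω (z n)))⁻¹ʳ) ≤ ℑ (ω (z n)) :=
    map_imaginaryPart_inverse_sub_le_of_subordination ι η ha₀ (hz n).nonneg (hω _ (hz n)).2
  obtain ⟨M, hM, huM⟩ :=
    exists_pos_isStrictlyPositive_smul_sub (isStrictlyPositive_map ι hℓ) hu.isSelfAdjoint
  obtain ⟨K, hK, hℓK⟩ := exists_pos_isStrictlyPositive_smul_sub
    (isStrictlyPositive_one (A := B)) (hℓ.smul hM).isSelfAdjoint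
  refine ⟨K⁻¹, inv_pos.mpr hK, fun t ht => ?_⟩
  set a : A := ι ω₀ + ((t : ℂ) * Complex.I) • u
  have ha_re : (ℜ a : A) = ι ω₀ :=
    realPart_add_ofReal_mul_I_smul (hω₀.map ι) hu.isSelfAdjoint t
  have ha_im : (ℑ a : A) = t • u :=
    imaginaryPart_add_ofReal_mul_I_smul (hω₀.map ι) hu.isSelfAdjoint t
  have hlim : Tendsto (fun n => ι (ω (z n))) l (𝓝 (ℜ a)) :=
    ha_re ▸ ((map_continuous ι).tendsto ω₀).comp hconv
  have hlim_im : Tendsto (fun n => (t * M * ‖(ℑ (ω (z n)) : B)‖⁻¹) • (ℑ (ω (z n)) : B)) l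
      (𝓝 ((t * M) • ℓ)) := by
    simpa only [mul_smul] using hlconv.const_smul (t * M)
  have hgap : IsStrictlyPositive (ι ((t * M) • ℓ) - ℑ a) := by
    rw [ha_im, ← Complex.coe_smul, map_smul, Complex.coe_smul, mul_smul, ← smul_sub]
    exact huM.smul ht
  rw [sub_sub, ← map_imaginaryPart]
  calc η (ℑ (X - a)⁻¹ʳ)
    _ ≤ (t * M) • ℓ :=
      map_imaginaryPart_inverse_sub_le ι η hX (ha_im ▸ hu.smul ht) (fun n => (hω _ (hz n)).1)
        (fun n => by positivity) hle hlim hlim_im hgap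
    _ ≤ t • K • (1 : B) := by
      rw [mul_smul]; exact smul_le_smul_of_nonneg_left (sub_nonneg.mp hℓK.nonneg) ht.le
    _ = algebraMap ℝ B (t / K⁻¹) := by
      rw [div_inv_eq_mul, Algebra.algebraMap_eq_smul_one, mul_smul]

lemma sPos_imP_add_ofReal_mul_I_smul {a v : B} (ha : IsSelfAdjoint a) (hv : SPos v) {t : ℝ}
    (ht : 0 < t) : SPos (imP (a + ((t : ℂ) * Complex.I) • v)) := by
  rw [imP_eq_imaginaryPart, imaginaryPart_add_ofReal_mul_I_smul ha hv.1]
  exact sPos_iff_isStrictlyPositive.mpr ((sPos_iff_isStrictlyPositive.mp hv).smul ht)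

end BoundaryLimit

/-- Theorem 4.2, "FullHorodiscs": under the subordination setup, if along a
sequence `yₙ ↓ 0` the values `ω(α + i yₙ v)` converge in norm to a selfadjoint `ω₀` and the
normalized imaginary parts converge in norm to a strictly positive `ℓ`, then for every
state `φ` on `B` and every strictly positive `u`, there is `ε₀ > 0` with
`φ(Im η((X − ω₀ − i t u)⁻¹)) ≤ t/ε₀` for all `t > 0`; in particular the liminf as `t → 0⁺`
of `φ(Im η((X − ω₀ − i t u)⁻¹))/t` is finite. -/
theorem julia_caratheodory_horodiscs
    {A B : Type*} [CStarAlgebra A] [PartialOrder A] [StarOrderedRing A]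
    [CStarAlgebra B] [PartialOrder B] [StarOrderedRing B]
    (ι : B →⋆ₐ[ℂ] A) (hι : Function.Injective ι)
    (X : A) (hX : IsSelfAdjoint X)
    (a₀ : B) (ha₀ : IsSelfAdjoint a₀)
    (η : A →L[ℂ] B)
    (hηcp : ∀ n : ℕ, ∀ p : Matrix (Fin n) (Fin n) A,
      (∃ y : Matrix (Fin n) (Fin n) A, p = star y * y) →
      ∃ z : Matrix (Fin n) (Fin n) B, p.map ⇑η = star z * z)
    (ω : B → B)
    (hω : ∀ b : B, SPos (imP b) →
      SPos (imP (ω b)) ∧ ω b = b + a₀ + η (Ring.inverse (X - ι (ω b))))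
    (α : B) (hα : IsSelfAdjoint α) (v : B) (hv : SPos v)
    (y : ℕ → ℝ) (hy : ∀ n, 0 < y n) (hy0 : Tendsto y atTop (𝓝 0))
    (ω₀ : B) (hω₀ : IsSelfAdjoint ω₀)
    (hconv : Tendsto (fun n => ω (α + ((y n : ℂ) * Complex.I) • v)) atTop (𝓝 ω₀))
    (ℓ : B) (hℓ : SPos ℓ)
    (hlconv : Tendsto
      (fun n => ‖imP (ω (α + ((y n : ℂ) * Complex.I) • v))‖⁻¹ •
        imP (ω (α + ((y n : ℂ) * Complex.I) • v))) atTop (𝓝 ℓ)) :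
    ∀ φ : B →L[ℂ] ℂ, (∀ a : B, 0 ≤ a → 0 ≤ φ a) → φ 1 = 1 →
    ∀ u : B, SPos u →
    ∃ ε₀ : ℝ, 0 < ε₀ ∧ ∀ t : ℝ, 0 < t →
      φ (imP (η (Ring.inverse (X - ι ω₀ - ((t : ℂ) * Complex.I) • ι u)))) ≤
        ((t / ε₀ : ℝ) : ℂ) := by
  intro φ hφ hφ1 u hu
  have hιu : SPos (ι u) :=
    sPos_iff_isStrictlyPositive.mpr (isStrictlyPositive_map ι (sPos_iff_isStrictlyPositive.mp hu))
  obtain ⟨ε₀, hε₀, hbound⟩ := julia_caratheodory_horodiscs_general ι hX ha₀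
    (.mk₀ η.toLinearMap fun _ => map_nonneg_of_matrix_fin_one (hηcp 1)) hω
    (fun n => sPos_imP_add_ofReal_mul_I_smul hα hv (hy n)) hω₀ hconv hℓ hlconv hιu
  exact ⟨ε₀, hε₀, fun t ht =>
    apply_le_of_le_algebraMap (φ := .mk₀ φ.toLinearMap hφ) hφ1 (hbound t ht)⟩
end
end

section
/- Let Y be a Banach space, let (Aₙ)ₙ be a decreasing sequence of norm-closed subsets of Y (A₁ ⊇ A₂ ⊇ A₃ ⊇ ⋯), and let K ⊆ Y be a norm-compact subset. Then ⋂ₙ (Aₙ + K) = (⋂ₙ Aₙ) + K, where S + K denotes the Minkowski sum {s + k : s ∈ S, k ∈ K}. -/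
noncomputable section

open Filter Topology
open scoped Pointwise
open scoped ComplexOrder

/-! A point `y` lies in `A + K` if and only if the closed set `{k | y - k ∈ A}` meets `K`. These
sets shrink along with `A`, so by compactness of `K` they have a common point in `K` as soon as
each of them meets `K`. -/

theorem inter_iInter_nonempty_iff_of_isCompact_of_directed {X ι : Type*} [TopologicalSpace X]
    [Nonempty ι] {K : Set X} (hK : IsCompact K) {t : ι → Set X} (hclosed : ∀ i, IsClosed (t i))
    (hdir : Directed (· ⊇ ·) t) :
    (K ∩ ⋂ i, t i).Nonempty ↔ ∀ i, (K ∩ t i).Nonempty := by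
  refine ⟨fun h i ↦ h.mono (Set.inter_subset_inter_right K (Set.iInter_subset t i)), fun h ↦ ?_⟩
  by_contra hempty
  obtain ⟨i, hi⟩ :=
    hK.elim_directed_family_closed t hclosed (Set.not_nonempty_iff_eq_empty.mp hempty) hdir
  exact (h i).ne_empty hi

theorem mem_add_iff_inter_preimage_sub_nonempty {G : Type*} [AddGroup G] {A K : Set G} {y : G} :
    y ∈ A + K ↔ (K ∩ (y - ·) ⁻¹' A).Nonempty := by
  constructor
  · rintro ⟨a, ha, k, hk, rfl⟩
    exact ⟨k, hk, by simpa only [Set.mem_preimage, add_sub_cancel_right] using ha⟩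
  · rintro ⟨k, hk, ha⟩
    exact ⟨y - k, ha, k, hk, sub_add_cancel y k⟩

theorem iInter_add_compact_general {G ι : Type*} [AddGroup G] [TopologicalSpace G]
    [SeparatelyContinuousAdd G] [ContinuousNeg G] [Nonempty ι] {A : ι → Set G}
    (hclosed : ∀ i, IsClosed (A i)) (hdir : Directed (· ⊇ ·) A) {K : Set G} (hK : IsCompact K) :
    (⋂ i, A i + K) = (⋂ i, A i) + K := by
  ext y
  have hcont : Continuous (y - ·) := by
    simpa only [sub_eq_add_neg] using continuous_neg.const_add y
  have hdir_preimage : Directed (· ⊇ ·) fun i ↦ (y - ·) ⁻¹' A i :=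
    Directed.mono_comp (· ⊇ ·) (g := Set.preimage (y - ·)) (fun _ _ h ↦ Set.preimage_mono h) hdir
  simp only [Set.mem_iInter, mem_add_iff_inter_preimage_sub_nonempty, Set.preimage_iInter]
  exact (inter_iInter_nonempty_iff_of_isCompact_of_directed hK
    (fun i ↦ (hclosed i).preimage hcont) hdir_preimage).symm

/-- in a Banach space, for a decreasing sequence of norm-closed sets `Aₙ`
and a norm-compact set `K`, the intersection of the Minkowski sums `Aₙ + K` equals the
Minkowski sum of the intersection with `K`. -/
theorem iInter_add_compact
    {Y : Type*} [NormedAddCommGroup Y] [NormedSpace ℝ Y] [CompleteSpace Y]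
    (A : ℕ → Set Y) (hclosed : ∀ n, IsClosed (A n)) (hdec : ∀ n, A (n + 1) ⊆ A n)
    (K : Set Y) (hK : IsCompact K) :
    (⋂ n, A n + K) = (⋂ n, A n) + K :=
  iInter_add_compact_general hclosed (antitone_nat_of_succ_le hdec).directed_ge hK
end
end

section
/- Let B be a unital C*-algebra, let (ωₙ) be a sequence in B such that each Im ωₙ is strictly positive, ‖Im ωₙ‖ → 0, and ωₙ converges in norm to a selfadjoint element ω₀ ∈ B, and let ℓ ∈ B be strictly positive with ‖Im ωₙ/‖Im ωₙ‖ − ℓ‖ → 0. Then for every w ∈ B such that Im w is strictly positive and ℓ − (w − ω₀)*(Im w)⁻¹(w − ω₀) is strictly positive, there exists N such that for all n ≥ N the element Im ωₙ/‖Im ωₙ‖ − (w − ωₙ)*(Im w)⁻¹(w − ωₙ) is strictly positive. -/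
noncomputable section

open Filter Topology
open scoped ComplexOrder

/-!
Strict positivity is open among the selfadjoint elements: a strictly positive `a` dominates a
scalar `r > 0`, and a selfadjoint `b` with `‖b - a‖ < r` still dominates `r - ‖b - a‖`. The elements
`Im ωₙ/‖Im ωₙ‖ - (w - ωₙ)*(Im w)⁻¹(w - ωₙ)` are selfadjoint and converge in norm to
`ℓ - (w - ω₀)*(Im w)⁻¹(w - ω₀)`.
-/

theorem sPos_iff_isStrictlyPositive_s9 {A : Type*} [Ring A] [StarRing A] [PartialOrder A]
    [StarOrderedRing A] {a : A} : SPos a ↔ IsStrictlyPositive a :=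
  ⟨fun h => h.2.2.isStrictlyPositive h.2.1, fun h => ⟨h.isSelfAdjoint, h.nonneg, h.isUnit⟩⟩

section CStarAlgebra

variable {B : Type*} [CStarAlgebra B] [PartialOrder B] [StarOrderedRing B] {a b : B}

theorem isStrictlyPositive_iff_exists_pos_algebraMap_le :
    IsStrictlyPositive a ↔ ∃ r > 0, algebraMap ℝ B r ≤ a := by
  refine ⟨fun ha => ?_, fun ⟨r, hr, hra⟩ => (isStrictlyPositive_algebraMap hr).of_le hra⟩
  cases subsingleton_or_nontrivial B
  · exact ⟨1, one_pos, (Subsingleton.elim _ a).le⟩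
  · exact (CFC.exists_pos_algebraMap_le_iff ha.isSelfAdjoint).2 fun _ hx => ha.spectrum_pos hx

theorem algebraMap_sub_norm_sub_le {r : ℝ} (hba : IsSelfAdjoint (b - a))
    (hra : algebraMap ℝ B r ≤ a) : algebraMap ℝ B (r - ‖b - a‖) ≤ b :=
  calc algebraMap ℝ B (r - ‖b - a‖)
      = algebraMap ℝ B r + -algebraMap ℝ B ‖b - a‖ := by rw [map_sub, sub_eq_add_neg]
    _ ≤ a + (b - a) := add_le_add hra hba.neg_algebraMap_norm_le_self
    _ = b := add_sub_cancel a b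

theorem eventually_isStrictlyPositive_nhdsWithin_isSelfAdjoint (ha : IsStrictlyPositive a) :
    ∀ᶠ b in 𝓝[{b | IsSelfAdjoint b}] a, IsStrictlyPositive b := by
  obtain ⟨r, hr, hra⟩ := isStrictlyPositive_iff_exists_pos_algebraMap_le.1 ha
  filter_upwards [self_mem_nhdsWithin, mem_nhdsWithin_of_mem_nhds (Metric.ball_mem_nhds a hr)]
    with b hb hbr
  exact isStrictlyPositive_iff_exists_pos_algebraMap_le.2 ⟨r - ‖b - a‖,
    sub_pos.2 (mem_ball_iff_norm.1 hbr), algebraMap_sub_norm_sub_le (hb.sub ha.isSelfAdjoint) hra⟩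

/-- Here `c` plays the role of `(Im w)⁻¹` and `v i` that of `Im ωᵢ/‖Im ωᵢ‖`. -/
theorem open_horodisc_eventual_inclusion_general {ι : Type*} {f : Filter ι} {ωs v : ι → B}
    {ω₀ ℓ c w : B} (hconv : Tendsto ωs f (𝓝 ω₀)) (hv : ∀ᶠ i in f, IsSelfAdjoint (v i))
    (hl : Tendsto v f (𝓝 ℓ)) (hc : IsSelfAdjoint c)
    (hwin : SPos (ℓ - star (w - ω₀) * c * (w - ω₀))) :
    ∀ᶠ i in f, SPos (v i - star (w - ωs i) * c * (w - ωs i)) := by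
  simp only [sPos_iff_isStrictlyPositive_s9] at hwin ⊢
  have hsub : Tendsto (fun i => w - ωs i) f (𝓝 (w - ω₀)) := hconv.const_sub w
  have hlim : Tendsto (fun i => v i - star (w - ωs i) * c * (w - ωs i)) f
      (𝓝 (ℓ - star (w - ω₀) * c * (w - ω₀))) :=
    hl.sub ((hsub.star.mul_const c).mul hsub)
  have hsa : ∀ᶠ i in f, IsSelfAdjoint (v i - star (w - ωs i) * c * (w - ωs i)) :=
    hv.mono fun i hi => hi.sub (hc.conjugate' (w - ωs i))
  exact (tendsto_nhdsWithin_iff.2 ⟨hlim, hsa⟩).eventually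
    (eventually_isStrictlyPositive_nhdsWithin_isSelfAdjoint hwin)

end CStarAlgebra

/-- if `ωₙ` have strictly positive imaginary parts with `‖Im ωₙ‖ → 0`,
`ωₙ → ω₀` in norm with `ω₀` selfadjoint, and the normalized imaginary parts converge in
norm to a strictly positive `ℓ`, then every point `w` of the open horodisc
`H̊₁(ω₀, ℓ)` eventually lies in the open sets `B̊⁺₁(ωₙ, ‖Im ωₙ‖^{-1/2})`. -/
theorem open_horodisc_eventual_inclusion
    {B : Type*} [CStarAlgebra B] [PartialOrder B] [StarOrderedRing B]
    (ωs : ℕ → B) (hIm : ∀ n, SPos (imP (ωs n)))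
    (hnorm : Tendsto (fun n => ‖imP (ωs n)‖) atTop (𝓝 0))
    (ω₀ : B) (hω₀ : IsSelfAdjoint ω₀) (hconv : Tendsto ωs atTop (𝓝 ω₀))
    (ℓ : B) (hℓ : SPos ℓ)
    (hl : Tendsto (fun n => ‖imP (ωs n)‖⁻¹ • imP (ωs n)) atTop (𝓝 ℓ))
    (w : B) (hw : SPos (imP w))
    (hwin : SPos (ℓ - star (w - ω₀) * Ring.inverse (imP w) * (w - ω₀))) :
    ∃ N : ℕ, ∀ n ≥ N,
      SPos (‖imP (ωs n)‖⁻¹ • imP (ωs n) -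
        star (w - ωs n) * Ring.inverse (imP w) * (w - ωs n)) :=
  eventually_atTop.1 <| open_horodisc_eventual_inclusion_general hconv
    (.of_forall fun n => (IsSelfAdjoint.all _).smul (hIm n).1) hl hw.1.ringInverse hwin
end
end

section
/- Let A be a unital C*-algebra, let X and u be selfadjoint elements of A, let v ∈ A be strictly positive, and let ε ∈ A be selfadjoint. Then the element E = (X − u)(v + iε)⁻¹(X − u) + v + iε satisfies Re E ≥ v; in particular E is invertible and ‖E⁻¹‖ ≤ ‖v⁻¹‖. -/
noncomputable section

open Filter Topology
open scoped ComplexOrder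

/-!
The real part of an inverse is a congruence transform of the real part: `ℜ b⁻¹ = (b⁻¹)* (ℜ b) b⁻¹`.
Hence inversion preserves the right half-plane, and so does `w ↦ Y* w⁻¹ Y + w`, which moreover does
not decrease the real part.

For the norm bound, let `v ≤ ℜ b` with `v` strictly positive and put `w = b⁻¹`. As `1 ≤ ‖v⁻¹‖ v`, we
get `w* w ≤ ‖v⁻¹‖ w* v w ≤ ‖v⁻¹‖ ℜ w`, so `‖w‖² ≤ ‖v⁻¹‖ ‖w‖`. Invertibility of `b` comes from
completing the square: with `h = ℜ b`, positivity of `(b - h)* h⁻¹ (b - h)` says `h ≤ b* h⁻¹ b`, and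
likewise `h ≤ b h⁻¹ b*`, so `b` has a left and a right inverse.
-/

open scoped ComplexStarModule Ring

theorem isUnit_of_isUnit_mul_of_isUnit_mul {M : Type*} [Monoid M] {a b c : M}
    (hab : IsUnit (a * b)) (hbc : IsUnit (b * c)) : IsUnit b := by
  obtain ⟨l, hl⟩ := hab.exists_left_inv
  obtain ⟨r, hr⟩ := hbc.exists_right_inv
  exact isUnit_iff_exists_and_exists.2 ⟨⟨c * r, by rwa [← mul_assoc]⟩, ⟨l * a, by rwa [mul_assoc]⟩⟩

theorem reP_eq_realPart {A : Type*} [NonUnitalRing A] [StarRing A] [Module ℂ A] [StarModule ℂ A]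
    (b : A) : reP b = ℜ b := by
  rw [reP, realPart_apply_coe, ← Complex.coe_smul, Complex.ofReal_inv, Complex.ofReal_ofNat]

section StarModule

variable {A : Type*} [AddCommGroup A] [Module ℂ A] [StarAddMonoid A] [StarModule ℂ A]

theorem realPart_star (b : A) : ℜ (star b) = ℜ b := by
  ext
  rw [realPart_apply_coe, realPart_apply_coe, star_star, add_comm]

theorem coe_realPart_add_coe_realPart (b : A) : (ℜ b : A) + ℜ b = b + star b := by
  rw [realPart_apply_coe, ← two_smul ℝ, smul_inv_smul₀ two_ne_zero]

theorem coe_realPart_add_I_smul {v ε : A} (hv : IsSelfAdjoint v) (hε : IsSelfAdjoint ε) :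
    (ℜ (v + Complex.I • ε) : A) = v := by
  rw [map_add, realPart_I_smul, hε.imaginaryPart, neg_zero, add_zero, hv.coe_realPart]

end StarModule

theorem coe_realPart_star_left_conjugate {A : Type*} [NonUnitalRing A] [StarRing A]
    [Module ℂ A] [IsScalarTower ℂ A A] [SMulCommClass ℂ A A] [StarModule ℂ A] (a b : A) :
    (ℜ (star a * b * a) : A) = star a * ℜ b * a := by
  rw [realPart_apply_coe, realPart_apply_coe, mul_smul_comm, smul_mul_assoc, mul_add, add_mul,
    star_mul, star_mul, star_star, mul_assoc (star a) (star b)]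

theorem coe_realPart_ringInverse {A : Type*} [Ring A] [StarRing A] [Algebra ℂ A]
    [StarModule ℂ A] (b : A) : (ℜ b⁻¹ʳ : A) = star b⁻¹ʳ * ℜ b * b⁻¹ʳ := by
  by_cases hb : IsUnit b
  · rw [← coe_realPart_star_left_conjugate, mul_assoc, Ring.mul_inverse_cancel b hb, mul_one,
      realPart_star]
  · simp only [Ring.inverse_non_unit b hb, map_zero, mul_zero, ZeroMemClass.coe_zero]

section StarOrderedRing

variable {A : Type*} [Ring A] [StarRing A] [PartialOrder A] [StarOrderedRing A]

theorem ringInverse_nonneg_of_isStrictlyPositive {h : A} (hh : IsStrictlyPositive h) :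
    0 ≤ h⁻¹ʳ := by
  have conjugate_nonneg : 0 ≤ star h⁻¹ʳ * h * h⁻¹ʳ := star_left_conjugate_nonneg hh.nonneg _
  rwa [hh.isSelfAdjoint.ringInverse.star_eq, Ring.inverse_mul_cancel h hh.isUnit,
    one_mul] at conjugate_nonneg

theorem add_star_sub_le_star_left_conjugate_ringInverse (b : A) {h : A}
    (hh : IsStrictlyPositive h) : b + star b - h ≤ star b * h⁻¹ʳ * b := by
  have square_nonneg : 0 ≤ star (b - h) * h⁻¹ʳ * (b - h) :=
    star_left_conjugate_nonneg (ringInverse_nonneg_of_isStrictlyPositive hh) _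
  have expand : star (b - h) * h⁻¹ʳ * (b - h) = star b * h⁻¹ʳ * b - (b + star b - h) :=
    calc star (b - h) * h⁻¹ʳ * (b - h)
        = star b * h⁻¹ʳ * b - star b * (h⁻¹ʳ * h) - h * h⁻¹ʳ * b + h * h⁻¹ʳ * h := by
          rw [star_sub, hh.isSelfAdjoint.star_eq]; noncomm_ring
      _ = star b * h⁻¹ʳ * b - (b + star b - h) := by
          rw [Ring.inverse_mul_cancel h hh.isUnit, Ring.mul_inverse_cancel h hh.isUnit]
          noncomm_ring
  rwa [expand, sub_nonneg] at square_nonneg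

variable [Algebra ℂ A] [StarModule ℂ A]

theorem coe_realPart_le_star_left_conjugate_ringInverse {b : A}
    (hb : IsStrictlyPositive (ℜ b : A)) : (ℜ b : A) ≤ star b * (ℜ b : A)⁻¹ʳ * b := by
  have le_conjugate := add_star_sub_le_star_left_conjugate_ringInverse b hb
  rwa [← coe_realPart_add_coe_realPart, add_sub_cancel_right] at le_conjugate

theorem coe_realPart_ringInverse_nonneg {b : A} (hb : 0 ≤ (ℜ b : A)) : 0 ≤ (ℜ b⁻¹ʳ : A) := by
  rw [coe_realPart_ringInverse]
  exact star_left_conjugate_nonneg hb _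

theorem coe_realPart_le_coe_realPart_conjugate_ringInverse_add (Y : A) {w : A}
    (hw : 0 ≤ (ℜ w : A)) : (ℜ w : A) ≤ ℜ (star Y * w⁻¹ʳ * Y + w) := by
  rw [map_add, AddSubgroup.coe_add, coe_realPart_star_left_conjugate]
  exact le_add_of_nonneg_left
    (star_left_conjugate_nonneg (coe_realPart_ringInverse_nonneg hw) Y)

end StarOrderedRing

section CStarAlgebra

variable {A : Type*} [CStarAlgebra A] [PartialOrder A] [StarOrderedRing A]

theorem isUnit_of_isStrictlyPositive_realPart {b : A} (hb : IsStrictlyPositive (ℜ b : A)) :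
    IsUnit b := by
  have left : IsUnit (star b * (ℜ b : A)⁻¹ʳ * b) :=
    (hb.of_le (coe_realPart_le_star_left_conjugate_ringInverse hb)).isUnit
  have right : IsUnit (b * ((ℜ b : A)⁻¹ʳ * star b)) := by
    have le_conjugate := coe_realPart_le_star_left_conjugate_ringInverse (b := star b)
      (by rwa [realPart_star])
    rw [realPart_star, star_star, mul_assoc] at le_conjugate
    exact (hb.of_le le_conjugate).isUnit
  exact isUnit_of_isUnit_mul_of_isUnit_mul left right

theorem one_le_norm_ringInverse_smul {v : A} (hv : IsStrictlyPositive v) :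
    1 ≤ ‖v⁻¹ʳ‖ • v := by
  have sqrt_mul_sqrt : CFC.sqrt v * CFC.sqrt v = v := CFC.sqrt_mul_sqrt_self v hv.nonneg
  have sqrt_unit : IsUnit (CFC.sqrt v) := CFC.isUnit_sqrt_iff_isStrictlyPositive.2 hv
  have sqrt_star : star (CFC.sqrt v) = CFC.sqrt v := (CFC.sqrt_nonneg v).isSelfAdjoint.star_eq
  have conjugate_inverse : CFC.sqrt v * v⁻¹ʳ * CFC.sqrt v = 1 := by
    nth_rw 2 [← sqrt_mul_sqrt]
    rw [Ring.inverse_mul (.inl sqrt_unit), ← mul_assoc, Ring.mul_inverse_cancel _ sqrt_unit,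
      one_mul, Ring.inverse_mul_cancel _ sqrt_unit]
  have conjugate_le := CStarAlgebra.star_left_conjugate_le_norm_smul (a := CFC.sqrt v)
    hv.ringInverse.isSelfAdjoint
  rwa [sqrt_star, conjugate_inverse, sqrt_mul_sqrt] at conjugate_le

theorem norm_ringInverse_le_of_le_realPart {v b : A} (hv : IsStrictlyPositive v)
    (hb : v ≤ ℜ b) : ‖b⁻¹ʳ‖ ≤ ‖v⁻¹ʳ‖ := by
  have star_mul_self_le : star b⁻¹ʳ * b⁻¹ʳ ≤ ‖v⁻¹ʳ‖ • (ℜ b⁻¹ʳ : A) :=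
    calc star b⁻¹ʳ * b⁻¹ʳ = star b⁻¹ʳ * 1 * b⁻¹ʳ := by rw [mul_one]
      _ ≤ star b⁻¹ʳ * (‖v⁻¹ʳ‖ • v) * b⁻¹ʳ :=
        star_left_conjugate_le_conjugate (one_le_norm_ringInverse_smul hv) _
      _ ≤ star b⁻¹ʳ * (‖v⁻¹ʳ‖ • (ℜ b : A)) * b⁻¹ʳ :=
        star_left_conjugate_le_conjugate (smul_le_smul_of_nonneg_left hb (norm_nonneg _)) _
      _ = ‖v⁻¹ʳ‖ • (ℜ b⁻¹ʳ : A) := by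
        rw [mul_smul_comm, smul_mul_assoc, coe_realPart_ringInverse]
  have norm_mul_le : ‖b⁻¹ʳ‖ * ‖b⁻¹ʳ‖ ≤ ‖v⁻¹ʳ‖ * ‖b⁻¹ʳ‖ :=
    calc ‖b⁻¹ʳ‖ * ‖b⁻¹ʳ‖ = ‖star b⁻¹ʳ * b⁻¹ʳ‖ := CStarRing.norm_star_mul_self.symm
      _ ≤ ‖‖v⁻¹ʳ‖ • (ℜ b⁻¹ʳ : A)‖ :=
        CStarAlgebra.norm_le_norm_of_nonneg_of_le (star_mul_self_nonneg _) star_mul_self_le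
      _ = ‖v⁻¹ʳ‖ * ‖(ℜ b⁻¹ʳ : A)‖ := by rw [norm_smul, norm_norm]
      _ ≤ ‖v⁻¹ʳ‖ * ‖b⁻¹ʳ‖ := mul_le_mul_of_nonneg_left (realPart.norm_le b⁻¹ʳ) (norm_nonneg _)
  rcases (norm_nonneg b⁻¹ʳ).eq_or_lt with norm_eq_zero | norm_pos
  · exact norm_eq_zero ▸ norm_nonneg _
  · exact le_of_mul_le_mul_right norm_mul_le norm_pos

theorem real_part_bound_general {v w : A} (Y : A) (hv : IsStrictlyPositive v) (hw : v ≤ ℜ w) :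
    IsUnit w ∧
    v ≤ ℜ (star Y * w⁻¹ʳ * Y + w) ∧
    IsUnit (star Y * w⁻¹ʳ * Y + w) ∧
    ‖(star Y * w⁻¹ʳ * Y + w)⁻¹ʳ‖ ≤ ‖v⁻¹ʳ‖ := by
  have hE : v ≤ ℜ (star Y * w⁻¹ʳ * Y + w) :=
    hw.trans (coe_realPart_le_coe_realPart_conjugate_ringInverse_add Y (hv.nonneg.trans hw))
  exact ⟨isUnit_of_isStrictlyPositive_realPart (hv.of_le hw), hE,
    isUnit_of_isStrictlyPositive_realPart (hv.of_le hE), norm_ringInverse_le_of_le_realPart hv hE⟩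

end CStarAlgebra

/-- for `X, u` selfadjoint, `v` strictly positive and `ε` selfadjoint, the
element `E = (X − u)(v + iε)⁻¹(X − u) + v + iε` has real part `≥ v`; in particular `v + iε`
and `E` are invertible and `‖E⁻¹‖ ≤ ‖v⁻¹‖`. -/
theorem real_part_bound
    {A : Type*} [CStarAlgebra A] [PartialOrder A] [StarOrderedRing A]
    (X u v ε : A) (hX : IsSelfAdjoint X) (hu : IsSelfAdjoint u)
    (hv : SPos v) (hε : IsSelfAdjoint ε) :
    IsUnit (v + Complex.I • ε) ∧
    v ≤ reP ((X - u) * Ring.inverse (v + Complex.I • ε) * (X - u) + v + Complex.I • ε) ∧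
    IsUnit ((X - u) * Ring.inverse (v + Complex.I • ε) * (X - u) + v + Complex.I • ε) ∧
    ‖Ring.inverse ((X - u) * Ring.inverse (v + Complex.I • ε) * (X - u) + v + Complex.I • ε)‖
      ≤ ‖Ring.inverse v‖ := by
  simpa only [reP_eq_realPart, (hX.sub hu).star_eq, ← add_assoc] using
    real_part_bound_general (X - u) ⟨hv.2.1, hv.2.2⟩ (coe_realPart_add_I_smul hv.1 hε).ge
end
end
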